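/- Let Δ > 0, K ≥ 1, and let X, Y be real n₁×n₂ matrices with ‖X - Y‖_max ≤ (K-1)Δ. Let (i₁,j₁),…,(i_{m'},j_{m'}) be i.i.d. indices uniformly distributed on [n₁]×[n₂] and τ₁,…,τ_{m'} be i.i.d. uniform on [-Δ/2, Δ/2], independent of the indices. Then for every ε > 0, P( | (1/m') Σ_{k=1}^{m'} |Q_Δ(X_{i_k,j_k} + τ_k) - Q_Δ(Y_{i_k,j_k} + τ_k)| − (1/(n₁n₂)) ‖X - Y‖₁ | ≥ ε ) ≤ 2 exp( −2 ε² m' / (K² Δ²) ). -/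

import Mathlib

open MeasureTheory ProbabilityTheory

/-- The uniform quantizer `Q_Δ(t) = Δ(⌊t/Δ⌋ + 1/2)`. -/
noncomputable def uniformQuantizer (Δ : ℝ) (t : ℝ) : ℝ :=
  Δ * ((⌊t / Δ⌋ : ℤ) + 1 / 2)

/-- The uniform probability measure on the interval `[-Δ/2, Δ/2]`. -/
noncomputable def uniformDither (Δ : ℝ) : Measure ℝ :=
  (ENNReal.ofReal Δ)⁻¹ • volume.restrict (Set.Icc (-(Δ / 2)) (Δ / 2))

/-- The uniform probability measure on the finite index set `Fin n₁ × Fin n₂`. -/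
noncomputable def uniformIndex (n₁ n₂ : ℕ) : Measure (Fin n₁ × Fin n₂) :=
  ((n₁ * n₂ : ℕ) : ENNReal)⁻¹ • Measure.count

/-- The entrywise ℓ₁-norm of a real matrix. -/
noncomputable def matL1 {n₁ n₂ : ℕ} (X : Matrix (Fin n₁) (Fin n₂) ℝ) : ℝ :=
  ∑ i, ∑ j, |X i j|

/-!
The dither makes the quantizer unbiased: the error `Q_Δ(t) - t` is `Δ`-periodic with mean zero
over a period, so `E Q_Δ(x + τ) = x`. Since `Q_Δ` is monotone, `Q_Δ(x + τ) - Q_Δ(y + τ)` keeps its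
sign as `τ` varies, and hence `E |Q_Δ(x + τ) - Q_Δ(y + τ)| = |x - y|` exactly. Averaging over the
random entry, the summands are i.i.d. with mean `‖X - Y‖₁ / (n₁ n₂)`. As `|Q_Δ(s) - s| ≤ Δ/2`,
they lie in `[0, KΔ]`, and Hoeffding's inequality applies.
-/

section Hoeffding

variable {Ω ι : Type*} [MeasurableSpace Ω] {P : Measure Ω} {ε : ℝ}

lemma measureReal_abs_ge_le_of_hasSubgaussianMGF {X : Ω → ℝ} {c : NNReal}
    (hX : HasSubgaussianMGF X c P) (hε : 0 ≤ ε) :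
    P.real {ω | ε ≤ |X ω|} ≤ 2 * Real.exp (-ε ^ 2 / (2 * c)) := by
  have habs : {ω | ε ≤ |X ω|} = {ω | ε ≤ X ω} ∪ {ω | ε ≤ (-X) ω} :=
    Set.ext fun _ ↦ le_abs (α := ℝ)
  calc P.real {ω | ε ≤ |X ω|}
      ≤ P.real {ω | ε ≤ X ω} + P.real {ω | ε ≤ (-X) ω} := habs ▸ measureReal_union_le _ _
    _ ≤ Real.exp (-ε ^ 2 / (2 * c)) + Real.exp (-ε ^ 2 / (2 * c)) :=
      add_le_add (hX.measure_ge_le hε) (hX.neg.measure_ge_le hε)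
    _ = 2 * Real.exp (-ε ^ 2 / (2 * c)) := (two_mul _).symm

lemma measureReal_abs_sum_sub_integral_ge_le_of_mem_Icc {X : ι → Ω → ℝ} {a b : ι → ℝ}
    {s : Finset ι} (hindep : iIndepFun X P) (hmeas : ∀ i ∈ s, AEMeasurable (X i) P)
    (hmem : ∀ i ∈ s, ∀ᵐ ω ∂P, X i ω ∈ Set.Icc (a i) (b i)) (hε : 0 ≤ ε) :
    P.real {ω | ε ≤ |∑ i ∈ s, (X i ω - P[X i])|}
      ≤ 2 * Real.exp (-(2 * ε ^ 2) / ∑ i ∈ s, (b i - a i) ^ 2) := by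
  have := hindep.isProbabilityMeasure
  have hcentered : iIndepFun (fun i ω ↦ X i ω - P[X i]) P :=
    hindep.comp (fun i z ↦ z - ∫ ω, X i ω ∂P) fun i ↦ measurable_id.sub_const _
  have hsum := HasSubgaussianMGF.sum_of_iIndepFun hcentered
    fun i hi ↦ hasSubgaussianMGF_of_mem_Icc (hmeas i hi) (hmem i hi)
  convert measureReal_abs_ge_le_of_hasSubgaussianMGF hsum hε using 3
  simp only [NNReal.coe_sum, NNReal.coe_pow, NNReal.coe_div, coe_nnnorm, Real.norm_eq_abs,
    NNReal.coe_ofNat, div_pow, sq_abs, ← Finset.sum_div]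
  ring

lemma measureReal_abs_mean_sub_ge_le_of_mem_Icc [Fintype ι] {X : ι → Ω → ℝ} {a b m : ℝ}
    (hindep : iIndepFun X P) (hmeas : ∀ i, AEMeasurable (X i) P)
    (hmem : ∀ i, ∀ᵐ ω ∂P, X i ω ∈ Set.Icc a b) (hmean : ∀ i, P[X i] = m) (hε : 0 ≤ ε) :
    P.real {ω | ε ≤ |(Fintype.card ι : ℝ)⁻¹ * ∑ i, X i ω - m|}
      ≤ 2 * Real.exp (-(2 * ε ^ 2 * Fintype.card ι) / (b - a) ^ 2) := by
  have := hindep.isProbabilityMeasure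
  cases isEmpty_or_nonempty ι with
  | inl _ =>
    refine measureReal_le_one.trans ?_
    norm_num [Fintype.card_eq_zero]
  | inr _ =>
    set N : ℝ := (Fintype.card ι : ℝ) with hN
    have hN_pos : 0 < N := Nat.cast_pos.mpr Fintype.card_pos
    have hscale (ω : Ω) : ∑ i, (X i ω - P[X i]) = N * (N⁻¹ * ∑ i, X i ω - m) := by
      rw [mul_sub, mul_inv_cancel_left₀ hN_pos.ne', Finset.sum_sub_distrib]
      simp [hmean, hN]
    convert measureReal_abs_sum_sub_integral_ge_le_of_mem_Icc (s := Finset.univ) hindep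
      (fun i _ ↦ hmeas i) (fun i _ ↦ hmem i) (mul_nonneg hN_pos.le hε) using 3
    · simp only [hscale, abs_mul, abs_of_pos hN_pos, mul_le_mul_iff_right₀ hN_pos]
    · rw [Finset.sum_const, Finset.card_univ, nsmul_eq_mul, ← hN]
      field_simp

end Hoeffding

section Quantizer

variable {Δ : ℝ}

lemma measurable_uniformQuantizer (Δ : ℝ) : Measurable (uniformQuantizer Δ) := by
  unfold uniformQuantizer
  fun_prop

lemma uniformQuantizer_mono (hΔ : 0 ≤ Δ) : Monotone (uniformQuantizer Δ) := by
  intro s t hst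
  unfold uniformQuantizer
  gcongr

lemma uniformQuantizer_const_add_mono (hΔ : 0 ≤ Δ) (x : ℝ) :
    Monotone fun t ↦ uniformQuantizer Δ (x + t) :=
  (uniformQuantizer_mono hΔ).comp (monotone_id.const_add x)

lemma uniformQuantizer_add_self (hΔ : Δ ≠ 0) (t : ℝ) :
    uniformQuantizer Δ (t + Δ) = uniformQuantizer Δ t + Δ := by
  simp only [uniformQuantizer, add_div, div_self hΔ, Int.floor_add_one]
  push_cast
  ring

lemma uniformQuantizer_of_mem_Ico {t : ℝ} (ht : t ∈ Set.Ico 0 Δ) :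
    uniformQuantizer Δ t = Δ / 2 := by
  have hfloor : ⌊t / Δ⌋ = 0 :=
    Int.floor_eq_zero_iff.mpr
      ⟨div_nonneg ht.1 (ht.1.trans ht.2.le), (div_lt_one (ht.1.trans_lt ht.2)).mpr ht.2⟩
  rw [uniformQuantizer, hfloor, Int.cast_zero]
  ring

lemma uniformQuantizer_sub_self (hΔ : Δ ≠ 0) (t : ℝ) :
    uniformQuantizer Δ t - t = Δ * (1 / 2 - Int.fract (t / Δ)) := by
  rw [uniformQuantizer, Int.fract]
  field_simp
  ring

lemma abs_uniformQuantizer_sub_self_le (hΔ : 0 < Δ) (t : ℝ) :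
    |uniformQuantizer Δ t - t| ≤ Δ / 2 := by
  rw [uniformQuantizer_sub_self hΔ.ne', abs_mul, abs_of_pos hΔ, div_eq_mul_one_div Δ]
  gcongr
  rw [abs_le]
  constructor <;> linarith [Int.fract_nonneg (t / Δ), Int.fract_lt_one (t / Δ)]

lemma abs_uniformQuantizer_sub_le (hΔ : 0 < Δ) (s t : ℝ) :
    |uniformQuantizer Δ s - uniformQuantizer Δ t| ≤ |s - t| + Δ := by
  calc |uniformQuantizer Δ s - uniformQuantizer Δ t|
      = |(s - t) + ((uniformQuantizer Δ s - s) - (uniformQuantizer Δ t - t))| := by ring_nf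
    _ ≤ |s - t| + (|uniformQuantizer Δ s - s| + |uniformQuantizer Δ t - t|) :=
      (abs_add_le _ _).trans (by gcongr; exact abs_sub _ _)
    _ ≤ |s - t| + Δ := by
      linarith [abs_uniformQuantizer_sub_self_le hΔ s, abs_uniformQuantizer_sub_self_le hΔ t]

lemma integral_uniformQuantizer_sub_self (hΔ : 0 < Δ) (a : ℝ) :
    ∫ t in a..a + Δ, (uniformQuantizer Δ t - t) = 0 := by
  have hper : Function.Periodic (fun t ↦ uniformQuantizer Δ t - t) Δ := fun t ↦ by
    simp only [uniformQuantizer_add_self hΔ.ne', add_sub_add_right_eq_sub]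
  calc ∫ t in a..a + Δ, (uniformQuantizer Δ t - t)
      = ∫ t in 0..Δ, (uniformQuantizer Δ t - t) := by
        simpa only [zero_add] using hper.intervalIntegral_add_eq a 0
    _ = ∫ t in 0..Δ, (Δ / 2 - t) :=
        intervalIntegral.integral_congr_Ioo_of_le hΔ.le fun t ht ↦ by
          simp only [uniformQuantizer_of_mem_Ico (Set.Ioo_subset_Ico_self ht)]
    _ = 0 := by
        rw [intervalIntegral.integral_sub intervalIntegrable_const
          intervalIntegral.intervalIntegrable_id, intervalIntegral.integral_const, integral_id,
          smul_eq_mul]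
        ring

end Quantizer

section Dither

variable {Δ : ℝ}

lemma isProbabilityMeasure_uniformDither (hΔ : 0 < Δ) :
    IsProbabilityMeasure (uniformDither Δ) := by
  constructor
  rw [uniformDither, Measure.smul_apply, Measure.restrict_apply_univ, Real.volume_Icc,
    sub_neg_eq_add, add_halves, smul_eq_mul]
  exact ENNReal.inv_mul_cancel (ENNReal.ofReal_pos.mpr hΔ).ne' ENNReal.ofReal_ne_top

lemma integral_uniformDither (hΔ : 0 ≤ Δ) (f : ℝ → ℝ) :
    ∫ t, f t ∂uniformDither Δ = Δ⁻¹ * ∫ t in -(Δ / 2)..Δ / 2, f t := by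
  rw [uniformDither, integral_smul_measure, integral_Icc_eq_integral_Ioc,
    ← intervalIntegral.integral_of_le (by linarith), ENNReal.toReal_inv,
    ENNReal.toReal_ofReal hΔ, smul_eq_mul]

lemma integrable_uniformQuantizer_uniformDither (hΔ : 0 < Δ) (x : ℝ) :
    Integrable (fun t ↦ uniformQuantizer Δ (x + t)) (uniformDither Δ) :=
  Integrable.smul_measure
    (((uniformQuantizer_const_add_mono hΔ.le x).monotoneOn _).integrableOn_isCompact isCompact_Icc)
    (ENNReal.inv_ne_top.mpr (ENNReal.ofReal_pos.mpr hΔ).ne')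

lemma integral_uniformQuantizer_uniformDither (hΔ : 0 < Δ) (x : ℝ) :
    ∫ t, uniformQuantizer Δ (x + t) ∂uniformDither Δ = x := by
  have herr : ∫ t in -(Δ / 2)..Δ / 2, (uniformQuantizer Δ (x + t) - (x + t)) = 0 := by
    rw [intervalIntegral.integral_comp_add_left fun t ↦ uniformQuantizer Δ t - t]
    convert integral_uniformQuantizer_sub_self hΔ (x + -(Δ / 2)) using 2
    ring
  have hid : ∫ t in -(Δ / 2)..Δ / 2, (x + t) = Δ * x := by
    rw [intervalIntegral.integral_add intervalIntegrable_const
      intervalIntegral.intervalIntegrable_id, intervalIntegral.integral_const, integral_id,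
      smul_eq_mul]
    ring
  rw [intervalIntegral.integral_sub (uniformQuantizer_const_add_mono hΔ.le x).intervalIntegrable
    (Continuous.intervalIntegrable (by fun_prop) _ _), hid, sub_eq_zero] at herr
  rw [integral_uniformDither hΔ.le, herr, inv_mul_cancel_left₀ hΔ.ne']

lemma integral_abs_uniformQuantizer_sub_uniformDither (hΔ : 0 < Δ) (x y : ℝ) :
    ∫ t, |uniformQuantizer Δ (x + t) - uniformQuantizer Δ (y + t)| ∂uniformDither Δ
      = |x - y| := by
  wlog hyx : y ≤ x generalizing x y
  · simpa only [abs_sub_comm] using this y x (le_of_not_ge hyx)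
  have hnonneg (t : ℝ) : 0 ≤ uniformQuantizer Δ (x + t) - uniformQuantizer Δ (y + t) :=
    sub_nonneg.mpr (uniformQuantizer_mono hΔ.le (by gcongr))
  simp only [abs_of_nonneg (hnonneg _), abs_of_nonneg (sub_nonneg.mpr hyx)]
  rw [integral_sub (integrable_uniformQuantizer_uniformDither hΔ x)
    (integrable_uniformQuantizer_uniformDither hΔ y),
    integral_uniformQuantizer_uniformDither hΔ, integral_uniformQuantizer_uniformDither hΔ]

end Dither

section RandomEntry

variable {ι : Type*} [MeasurableSpace ι] {Δ : ℝ} {x y : ι → ℝ}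

lemma measurable_abs_uniformQuantizer_sub (Δ : ℝ) (hx : Measurable x) (hy : Measurable y) :
    Measurable fun w : ι × ℝ ↦
      |uniformQuantizer Δ (x w.1 + w.2) - uniformQuantizer Δ (y w.1 + w.2)| := by
  have := measurable_uniformQuantizer Δ
  fun_prop

lemma integral_abs_uniformQuantizer_sub_prod {ν : Measure ι} [IsFiniteMeasure ν] (hΔ : 0 < Δ)
    (hx : Measurable x) (hy : Measurable y) (hxy : Integrable (fun i ↦ x i - y i) ν) :
    ∫ w, |uniformQuantizer Δ (x w.1 + w.2) - uniformQuantizer Δ (y w.1 + w.2)|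
        ∂ν.prod (uniformDither Δ) = ∫ i, |x i - y i| ∂ν := by
  have := isProbabilityMeasure_uniformDither hΔ
  have hdom : Integrable (fun w : ι × ℝ ↦ |x w.1 - y w.1| + Δ) (ν.prod (uniformDither Δ)) :=
    (hxy.abs.comp_fst _).add (integrable_const Δ)
  rw [integral_prod _ (hdom.mono' (measurable_abs_uniformQuantizer_sub Δ hx hy).aestronglyMeasurable
    (ae_of_all _ fun w ↦ ?_))]
  · simp only [integral_abs_uniformQuantizer_sub_uniformDither hΔ]
  · simpa using abs_uniformQuantizer_sub_le hΔ (x w.1 + w.2) (y w.1 + w.2)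

end RandomEntry

section UniformIndex

variable {n₁ n₂ : ℕ}

lemma isProbabilityMeasure_uniformIndex (hn₁ : 0 < n₁) (hn₂ : 0 < n₂) :
    IsProbabilityMeasure (uniformIndex n₁ n₂) := by
  constructor
  rw [uniformIndex, Measure.smul_apply, Measure.count_univ, ENat.card_eq_coe_fintype_card,
    Fintype.card_prod, Fintype.card_fin, Fintype.card_fin, ENat.toENNReal_coe, smul_eq_mul]
  exact ENNReal.inv_mul_cancel (Nat.cast_ne_zero.mpr (Nat.mul_pos hn₁ hn₂).ne')
    (ENNReal.natCast_ne_top _)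

lemma integral_abs_uniformIndex (X : Matrix (Fin n₁) (Fin n₂) ℝ) :
    ∫ p, |X p.1 p.2| ∂uniformIndex n₁ n₂ = ((n₁ : ℝ) * n₂)⁻¹ * matL1 X := by
  rw [uniformIndex, integral_smul_measure, integral_count, Fintype.sum_prod_type, matL1,
    ENNReal.toReal_inv, ENNReal.toReal_natCast, Nat.cast_mul, smul_eq_mul]

end UniformIndex

theorem sampled_quantized_l1_concentration_general {ι κ : Type*} [MeasurableSpace ι] [Fintype κ]
    {ν : Measure ι} [IsProbabilityMeasure ν] {Δ K : ℝ} (hΔ : 0 < Δ) {x y : ι → ℝ}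
    (hx : Measurable x) (hy : Measurable y) (hmax : ∀ᵐ i ∂ν, |x i - y i| ≤ (K - 1) * Δ)
    {Ω : Type*} [MeasurableSpace Ω] {P : Measure Ω} {W : κ → Ω → ι × ℝ}
    (hindep : iIndepFun W P) (hlaw : ∀ k, HasLaw (W k) (ν.prod (uniformDither Δ)) P)
    {ε : ℝ} (hε : 0 ≤ ε) :
    P {ω | ε ≤ |(Fintype.card κ : ℝ)⁻¹ * (∑ k,
          |uniformQuantizer Δ (x (W k ω).1 + (W k ω).2)
            - uniformQuantizer Δ (y (W k ω).1 + (W k ω).2)|) - ∫ i, |x i - y i| ∂ν|}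
      ≤ ENNReal.ofReal (2 * Real.exp (-(2 * ε ^ 2 * Fintype.card κ) / (K ^ 2 * Δ ^ 2))) := by
  have := hindep.isProbabilityMeasure
  have := isProbabilityMeasure_uniformDither hΔ
  have hxy : Integrable (fun i ↦ x i - y i) ν :=
    .of_bound (hx.sub hy).aestronglyMeasurable _ hmax
  have hmeas := measurable_abs_uniformQuantizer_sub Δ hx hy
  have hmem : ∀ᵐ w ∂ν.prod (uniformDither Δ),
      |uniformQuantizer Δ (x w.1 + w.2) - uniformQuantizer Δ (y w.1 + w.2)|
        ∈ Set.Icc 0 (K * Δ) := by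
    filter_upwards [Measure.quasiMeasurePreserving_fst.ae hmax] with w hw
    have hquant := abs_uniformQuantizer_sub_le hΔ (x w.1 + w.2) (y w.1 + w.2)
    rw [add_sub_add_right_eq_sub] at hquant
    exact ⟨abs_nonneg _, by linarith⟩
  rw [← ofReal_measureReal, ← mul_pow, ← sub_zero (K * Δ)]
  refine ENNReal.ofReal_le_ofReal (measureReal_abs_mean_sub_ge_le_of_mem_Icc
    (hindep.comp _ fun _ ↦ hmeas) (fun k ↦ hmeas.comp_aemeasurable (hlaw k).aemeasurable)
    (fun k ↦ ae_of_ae_map (hlaw k).aemeasurable ((hlaw k).map_eq ▸ hmem)) (fun k ↦ ?_) hε)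
  exact ((hlaw k).integral_comp hmeas.aestronglyMeasurable).trans
    (integral_abs_uniformQuantizer_sub_prod hΔ hx hy hxy)

/-- Hoeffding-type concentration of the sampled quantized ℓ₁ distance: if
`‖X - Y‖_max ≤ (K-1)Δ`, then for i.i.d. uniform indices and i.i.d. uniform dithers
independent of the indices (encoded by the i.i.d. family `W k = ((i_k,j_k), τ_k)` with
product distribution), for every `ε > 0`,
`P(|(1/m')Σ_k |Q_Δ(X+τ) - Q_Δ(Y+τ)| - ‖X-Y‖₁/(n₁n₂)| ≥ ε) ≤ 2 exp(-2ε²m'/(K²Δ²))`. -/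
theorem sampled_quantized_l1_concentration {n₁ n₂ m' : ℕ} (hn₁ : 0 < n₁) (hn₂ : 0 < n₂)
    (Δ K : ℝ) (hΔ : 0 < Δ) (hK : 1 ≤ K)
    (X Y : Matrix (Fin n₁) (Fin n₂) ℝ)
    (hmax : ∀ i j, |X i j - Y i j| ≤ (K - 1) * Δ)
    {Ω : Type*} [MeasurableSpace Ω] (P : Measure Ω) [IsProbabilityMeasure P]
    (W : Fin m' → Ω → (Fin n₁ × Fin n₂) × ℝ)
    (hmeas : ∀ k, Measurable (W k))
    (hindep : iIndepFun W P)
    (hdist : ∀ k, Measure.map (W k) P = (uniformIndex n₁ n₂).prod (uniformDither Δ))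
    (ε : ℝ) (hε : 0 < ε) :
    P {ω | ε ≤ |(m' : ℝ)⁻¹ * (∑ k : Fin m',
          |uniformQuantizer Δ (X (W k ω).1.1 (W k ω).1.2 + (W k ω).2)
            - uniformQuantizer Δ (Y (W k ω).1.1 (W k ω).1.2 + (W k ω).2)|)
        - ((n₁ : ℝ) * n₂)⁻¹ * matL1 (X - Y)|}
      ≤ ENNReal.ofReal (2 * Real.exp (-(2 * ε ^ 2 * m') / (K ^ 2 * Δ ^ 2))) := by
  have := isProbabilityMeasure_uniformIndex hn₁ hn₂
  simpa only [Fintype.card_fin, ← integral_abs_uniformIndex, Matrix.sub_apply] using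
    sampled_quantized_l1_concentration_general hΔ (.of_discrete : Measurable fun p ↦ X p.1 p.2)
      (.of_discrete : Measurable fun p ↦ Y p.1 p.2) (ae_of_all _ fun p ↦ hmax p.1 p.2) hindep
      (fun k ↦ ⟨(hmeas k).aemeasurable, hdist k⟩) hε.le
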